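/- Suppose M has finite diameter and there exists l₀ > 0 with π·l₀² ≤ 1 such that A(l) = π·l² for all 0 ≤ l ≤ l₀ (the space is locally flat and two-dimensional around x out to radius l₀). Then for each fixed k ≥ 1 and each ρ with 1 − π·l₀² < ρ < 1, there exists a constant C > 0 such that for all N ≥ k: |E[D_k(N)] − (1/√π) · (Γ(k + 1/2)/Γ(k)) · (Γ(N + 1)/Γ(N + 3/2))| ≤ C·ρ^N. In particular, the expected k-th nearest-neighbor distance equals the flat-space closed form up to corrections exponentially small in N. -/

import Mathlib

open MeasureTheory Metric Filter
open scoped ENNReal Topology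

/-- The `k`-th smallest value (1-indexed) among the `N` real numbers `f 0, …, f (N-1)`. -/
noncomputable def kthVal {N : ℕ} (k : ℕ) (f : Fin N → ℝ) : ℝ :=
  (((Finset.univ : Finset (Fin N)).val.map f).sort (· ≤ ·)).getD (k - 1) 0

/-!
Write `A` for the distribution function of the distance to `x`. Since `D_k(N) > t` means that fewer
than `k` of the `N` points lie within distance `t`, the layer cake formula gives
`E[D_k(N)] = ∫₀^∞ Q(A(t)) dt` with `Q(p) = P(Bin(N, p) < k)`. The flat distribution function
`G(t) = min(1, π t²)` turns this integral into a beta integral, which is the closed form. As `A` and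
`G` agree on `[0, l₀]` and both are at least `p₀ = π l₀²` beyond `l₀`, the two integrals differ by
at most `∫₀^∞ |A - G|` times the Lipschitz constant of `Q` on `[p₀, 1]`. That constant is
exponentially small in `N`, because `Q'(p) = -k C(N, k) p^(k-1) (1-p)^(N-k)`.
-/

section BinomialTail

/-- The probability that a binomial variable with parameters `N` and `p` is less than `k`, written
out so that it makes sense for every real `p`. -/
noncomputable def binomialTail (N k : ℕ) (p : ℝ) : ℝ :=
  ∑ j ∈ Finset.range k, (N.choose j : ℝ) * p ^ j * (1 - p) ^ (N - j)

@[fun_prop]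
theorem continuous_binomialTail (N k : ℕ) : Continuous (binomialTail N k) := by
  unfold binomialTail
  fun_prop

theorem binomialTail_one {N k : ℕ} (hkN : k ≤ N) : binomialTail N k 1 = 0 := by
  refine Finset.sum_eq_zero fun j hj => ?_
  have hjN : N - j ≠ 0 := by have := Finset.mem_range.1 hj; omega
  simp [hjN]

theorem hasDerivAt_binomialTail (N k : ℕ) (p : ℝ) :
    HasDerivAt (binomialTail N k)
      (-(k * N.choose k * p ^ (k - 1) * (1 - p) ^ (N - k))) p := by
  induction k with
  | zero =>
    have hzero : binomialTail N 0 = fun _ => 0 := funext fun _ => Finset.sum_range_zero _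
    simpa only [hzero, Nat.cast_zero, zero_mul, neg_zero] using hasDerivAt_const p (0 : ℝ)
  | succ k ih =>
    have hterm : HasDerivAt (fun q : ℝ => (N.choose k : ℝ) * q ^ k * (1 - q) ^ (N - k))
        (N.choose k * (k * p ^ (k - 1)) * (1 - p) ^ (N - k) +
          N.choose k * p ^ k * ((N - k : ℕ) * (1 - p) ^ (N - k - 1) * -1)) p :=
      ((hasDerivAt_pow k p).const_mul _).mul (((hasDerivAt_id p).const_sub 1).pow (N - k))
    have hsucc : binomialTail N (k + 1) =
        binomialTail N k + fun q : ℝ => (N.choose k : ℝ) * q ^ k * (1 - q) ^ (N - k) :=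
      funext fun q => Finset.sum_range_succ _ k
    have hchoose : (N.choose (k + 1) : ℝ) * (k + 1 : ℕ) = N.choose k * (N - k : ℕ) :=
      mod_cast N.choose_succ_right_eq k
    rw [hsucc]
    refine (ih.add hterm).congr_deriv ?_
    rw [Nat.add_sub_cancel, ← Nat.sub_sub]
    linear_combination (p ^ k * (1 - p) ^ (N - k - 1)) * hchoose

theorem choose_mul_pow_mul_pow_le {R : Type*} [CommSemiring R] [PartialOrder R] [IsOrderedRing R]
    {N k : ℕ} (hkN : k ≤ N) {x y : R} (hx : 0 ≤ x) (hy : 0 ≤ y) :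
    N.choose k * x ^ k * y ^ (N - k) ≤ (x + y) ^ N := by
  rw [add_pow]
  calc N.choose k * x ^ k * y ^ (N - k) = x ^ k * y ^ (N - k) * N.choose k := by ring
    _ ≤ _ := Finset.single_le_sum (f := fun j => x ^ j * y ^ (N - j) * (N.choose j : R))
      (fun j _ => by positivity) (Finset.mem_range.2 (by omega))

theorem abs_binomialTail_sub_le {N k : ℕ} (hkN : k ≤ N) {p₀ ρ p q : ℝ} (hp₀ : 0 ≤ p₀)
    (hρ : 1 - p₀ < ρ) (hp : p ∈ Set.Icc p₀ 1) (hq : q ∈ Set.Icc p₀ 1) :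
    |binomialTail N k p - binomialTail N k q| ≤ k / (ρ - (1 - p₀)) ^ k * ρ ^ N * |p - q| := by
  set s := ρ - (1 - p₀) with hs
  have hs0 : 0 < s := sub_pos.2 hρ
  have hderiv : ∀ r ∈ Set.Icc p₀ 1,
      ‖-(k * N.choose k * r ^ (k - 1) * (1 - r) ^ (N - k))‖ ≤ k / s ^ k * ρ ^ N := by
    rintro r ⟨hr₀, hr1⟩
    have hr0 : 0 ≤ r := hp₀.trans hr₀
    have hr1' : 0 ≤ 1 - r := sub_nonneg.2 hr1
    have hle : 1 - r ≤ 1 - p₀ := sub_le_sub_left hr₀ 1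
    -- The Chernoff-type choice of `s` makes the two bases of the binomial term add up to `ρ`.
    have hchernoff : N.choose k * s ^ k * (1 - p₀) ^ (N - k) ≤ ρ ^ N := by
      simpa [hs] using choose_mul_pow_mul_pow_le hkN hs0.le (hr1'.trans hle)
    rw [norm_neg, Real.norm_of_nonneg (by positivity)]
    calc k * N.choose k * r ^ (k - 1) * (1 - r) ^ (N - k)
        ≤ k * N.choose k * 1 * (1 - p₀) ^ (N - k) := by
          gcongr
          exact pow_le_one₀ hr0 hr1
      _ = k / s ^ k * (N.choose k * s ^ k * (1 - p₀) ^ (N - k)) := by field_simp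
      _ ≤ k / s ^ k * ρ ^ N := by gcongr
  exact (convex_Icc p₀ 1).norm_image_sub_le_of_norm_hasDerivWithin_le
    (fun r _ => (hasDerivAt_binomialTail N k r).hasDerivWithinAt) hderiv hq hp

variable {α : Type*} [MeasurableSpace α] {ν : Measure α} {F G : α → ℝ} {N k : ℕ}

theorem integrable_binomialTail_comp (hkN : k ≤ N) (hF : ∀ᵐ t ∂ν, F t ∈ Set.Icc 0 1)
    (hint : Integrable (fun t => 1 - F t) ν) : Integrable (fun t => binomialTail N k (F t)) ν := by
  have hmeas : AEStronglyMeasurable F ν := by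
    simpa only [sub_sub_cancel] using
      (aestronglyMeasurable_const (b := (1 : ℝ))).fun_sub hint.aestronglyMeasurable
  refine (hint.const_mul (k / (2 - (1 - 0)) ^ k * 2 ^ N)).mono'
    ((continuous_binomialTail N k).comp_aestronglyMeasurable hmeas) (hF.mono fun t ht => ?_)
  simpa [binomialTail_one hkN, abs_sub_comm (F t), abs_of_nonneg (sub_nonneg.2 ht.2)] using
    abs_binomialTail_sub_le hkN le_rfl (by norm_num : (1 : ℝ) - 0 < 2) ht
      (Set.right_mem_Icc.2 zero_le_one)

theorem abs_integral_binomialTail_sub_le (hkN : k ≤ N) {p₀ ρ : ℝ} (hp₀ : 0 ≤ p₀)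
    (hρ : 1 - p₀ < ρ) (hF : ∀ᵐ t ∂ν, F t ∈ Set.Icc 0 1) (hG : ∀ᵐ t ∂ν, G t ∈ Set.Icc 0 1)
    (hFint : Integrable (fun t => 1 - F t) ν) (hGint : Integrable (fun t => 1 - G t) ν)
    (hFG : ∀ᵐ t ∂ν, F t = G t ∨ p₀ ≤ F t ∧ p₀ ≤ G t) :
    |∫ t, binomialTail N k (F t) ∂ν - ∫ t, binomialTail N k (G t) ∂ν| ≤
      k / (ρ - (1 - p₀)) ^ k * ρ ^ N * ∫ t, |F t - G t| ∂ν := by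
  rw [← integral_sub (integrable_binomialTail_comp hkN hF hFint)
    (integrable_binomialTail_comp hkN hG hGint), ← integral_const_mul, ← Real.norm_eq_abs]
  have hdiff : Integrable (fun t => |F t - G t|) ν := by
    simpa using (hGint.sub hFint).abs
  refine norm_integral_le_of_norm_le (hdiff.const_mul _) ?_
  filter_upwards [hF, hG, hFG] with t hFt hGt hFGt
  rcases hFGt with heq | ⟨hF₀, hG₀⟩
  · simp [heq]
  · exact abs_binomialTail_sub_le hkN hp₀ hρ ⟨hF₀, hFt.2⟩ ⟨hG₀, hGt.2⟩

end BinomialTail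

section FlatIntegral

theorem integral_rpow_mul_one_sub_rpow {u v : ℝ} (hu : 0 < u) (hv : 0 < v) :
    ∫ p in (0 : ℝ)..1, p ^ (u - 1) * (1 - p) ^ (v - 1) =
      Real.Gamma u * Real.Gamma v / Real.Gamma (u + v) := by
  rw [← ProbabilityTheory.beta, ProbabilityTheory.beta_eq_betaIntegralReal u v hu hv,
    ← Complex.ofReal_inj, ← Complex.ofReal_re (∫ p in (0 : ℝ)..1, _),
    ← intervalIntegral.integral_ofReal, Complex.betaIntegral]
  congr 2
  refine intervalIntegral.integral_congr fun p hp => ?_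
  rw [Set.uIcc_of_le zero_le_one] at hp
  rw [Complex.ofReal_mul, Complex.ofReal_cpow hp.1, Complex.ofReal_cpow (sub_nonneg.2 hp.2)]
  push_cast
  rfl

theorem integral_choose_mul_pow_mul_rpow {N k : ℕ} (hk : 1 ≤ k) (hkN : k ≤ N) {a : ℝ}
    (ha : 0 < a) :
    ∫ p in (0 : ℝ)..1, k * N.choose k * p ^ (k - 1) * (1 - p) ^ (N - k) * p ^ a =
      Real.Gamma (k + a) / Real.Gamma k * (Real.Gamma (N + 1) / Real.Gamma (N + 1 + a)) := by
  obtain ⟨m, rfl⟩ := Nat.exists_eq_add_of_le hkN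
  obtain ⟨j, rfl⟩ := Nat.exists_eq_add_of_le' hk
  have hbeta := integral_rpow_mul_one_sub_rpow (u := (j + 1 : ℕ) + a) (v := m + 1)
    (by positivity) (by positivity)
  have hcongr : ∫ p in (0 : ℝ)..1, p ^ (((j + 1 : ℕ) : ℝ) + a - 1) * (1 - p) ^ ((m : ℝ) + 1 - 1) =
      ∫ p in (0 : ℝ)..1, p ^ j * (1 - p) ^ m * p ^ a := by
    refine intervalIntegral.integral_congr fun p hp => ?_
    rw [Set.uIcc_of_le zero_le_one] at hp
    have hexp : ((j + 1 : ℕ) : ℝ) + a - 1 = j + a := by push_cast; ring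
    simp only [hexp, add_sub_cancel_right, Real.rpow_natCast]
    rw [Real.rpow_add_of_nonneg hp.1 (by positivity) ha.le, Real.rpow_natCast]
    ring
  have hchoose : ((j + 1 + m).choose (j + 1) : ℝ) * (j + 1).factorial * m.factorial =
      (j + 1 + m).factorial := mod_cast by
    simpa using Nat.choose_mul_factorial_mul_factorial (Nat.le_add_right (j + 1) m)
  have hk' : Real.Gamma ((j + 1 : ℕ) : ℝ) = j.factorial := by
    rw [Nat.cast_succ, Real.Gamma_nat_eq_factorial]
  have hsum : ((j + 1 : ℕ) : ℝ) + a + (m + 1) = (j + 1 + m : ℕ) + 1 + a := by push_cast; ring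
  rw [hcongr, hsum, Real.Gamma_nat_eq_factorial] at hbeta
  simp only [Nat.add_sub_cancel, Nat.add_sub_cancel_left, mul_assoc (_ * _ : ℝ)]
  simp only [mul_assoc ((j + 1 : ℕ) : ℝ), intervalIntegral.integral_const_mul]
  simp only [← mul_assoc] at hbeta ⊢
  rw [hbeta, hk', Real.Gamma_nat_eq_factorial, ← hchoose, Nat.factorial_succ]
  push_cast
  field_simp

theorem integral_binomialTail_mul_rpow {N k : ℕ} (hkN : k ≤ N) {a : ℝ} (ha : 0 < a) :
    ∫ p in (0 : ℝ)..1, binomialTail N k p * (a * p ^ (a - 1)) =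
      ∫ p in (0 : ℝ)..1, k * N.choose k * p ^ (k - 1) * (1 - p) ^ (N - k) * p ^ a := by
  have hpow : IntervalIntegrable (fun p : ℝ => a * p ^ (a - 1)) volume 0 1 :=
    (intervalIntegral.intervalIntegrable_rpow' (by linarith)).const_mul a
  have hparts := intervalIntegral.integral_mul_deriv_eq_deriv_mul_of_hasDerivAt
    (continuous_binomialTail N k).continuousOn (Real.continuous_rpow_const ha.le).continuousOn
    (fun p _ => hasDerivAt_binomialTail N k p)
    (fun p hp => Real.hasDerivAt_rpow_const (Or.inl (by simpa using hp.1.ne')))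
    (Continuous.intervalIntegrable (by fun_prop) 0 1) hpow
  simpa [binomialTail_one hkN, Real.zero_rpow ha.ne', intervalIntegral.integral_neg] using hparts

theorem mul_rpow_neg_one_div_rpow {c d : ℝ} (hc : 0 < c) (hd : d ≠ 0) :
    c * (c ^ (-(1 / d))) ^ d = 1 := by
  rw [← Real.rpow_mul hc.le, neg_mul, one_div_mul_cancel hd, Real.rpow_neg_one,
    mul_inv_cancel₀ hc.ne']

theorem integral_binomialTail_comp_mul_rpow {N k : ℕ} (hk : 1 ≤ k) (hkN : k ≤ N) {c d : ℝ}
    (hc : 0 < c) (hd : 0 < d) :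
    ∫ t in (0 : ℝ)..c ^ (-(1 / d)), binomialTail N k (c * t ^ d) =
      c ^ (-(1 / d)) * (Real.Gamma (k + 1 / d) / Real.Gamma k) *
        (Real.Gamma (N + 1) / Real.Gamma (N + 1 + 1 / d)) := by
  set b := c ^ (-(1 / d))
  have ha : 0 < 1 / d := by positivity
  have hbpos : 0 < b := by positivity
  have hinv : ∀ p ∈ Set.Icc (0 : ℝ) 1, c * (b * p ^ (1 / d)) ^ d = p := by
    intro p hp
    rw [Real.mul_rpow hbpos.le (Real.rpow_nonneg hp.1 _), ← Real.rpow_mul hp.1,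
      one_div_mul_cancel hd.ne', Real.rpow_one, ← mul_assoc,
      mul_rpow_neg_one_div_rpow hc hd.ne', one_mul]
  have hpow : IntervalIntegrable (fun p : ℝ => b * (1 / d * p ^ (1 / d - 1))) volume 0 1 :=
    ((intervalIntegral.intervalIntegrable_rpow' (by linarith)).const_mul _).const_mul b
  have hg : Continuous fun t : ℝ => binomialTail N k (c * t ^ d) := by
    have := Real.continuous_rpow_const hd.le
    fun_prop
  have hf : Continuous fun p : ℝ => b * p ^ (1 / d) := by
    have := Real.continuous_rpow_const ha.le
    fun_prop
  have hsubst := intervalIntegral.integral_comp_mul_deriv''' (a := 0) (b := 1) hf.continuousOn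
    (fun p hp => ((Real.hasDerivAt_rpow_const
      (Or.inl (by simpa using hp.1.ne'))).const_mul b).hasDerivWithinAt)
    hg.continuousOn (hg.continuousOn.integrableOn_compact (isCompact_uIcc.image hf))
    ((intervalIntegrable_iff' enorm_ne_top).1
      (hpow.continuousOn_mul (hg.comp hf).continuousOn))
  rw [Real.zero_rpow ha.ne', Real.one_rpow, mul_zero, mul_one] at hsubst
  rw [← hsubst, mul_assoc, ← integral_choose_mul_pow_mul_rpow hk hkN ha,
    ← integral_binomialTail_mul_rpow hkN ha, ← intervalIntegral.integral_const_mul]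
  refine intervalIntegral.integral_congr fun p hp => ?_
  rw [Set.uIcc_of_le zero_le_one] at hp
  simp only [Function.comp_apply, hinv p hp]
  ring

theorem min_one_mul_rpow_eq_one {c d t : ℝ} (hc : 0 < c) (hd : 0 < d)
    (ht : c ^ (-(1 / d)) ≤ t) : min 1 (c * t ^ d) = 1 := by
  refine min_eq_left ?_
  calc 1 = c * (c ^ (-(1 / d))) ^ d := (mul_rpow_neg_one_div_rpow hc hd.ne').symm
    _ ≤ c * t ^ d := by gcongr

theorem integrableOn_one_sub_min_one_mul_rpow {c d : ℝ} (hc : 0 < c) (hd : 0 < d) :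
    IntegrableOn (fun t : ℝ => 1 - min 1 (c * t ^ d)) (Set.Ioi 0) := by
  have hcont : Continuous fun t : ℝ => 1 - min 1 (c * t ^ d) := by
    have := Real.continuous_rpow_const hd.le
    fun_prop
  refine IntegrableOn.of_forall_sdiff_eq_zero
    (hcont.integrableOn_Ioc (a := 0) (b := c ^ (-(1 / d)))) measurableSet_Ioi fun t ht => ?_
  rw [Set.Ioi_sdiff_Ioc, Set.mem_Ioi, max_lt_iff] at ht
  rw [min_one_mul_rpow_eq_one hc hd ht.2.le, sub_self]

theorem integral_binomialTail_comp_min_one_mul_rpow {N k : ℕ} (hk : 1 ≤ k) (hkN : k ≤ N)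
    {c d : ℝ} (hc : 0 < c) (hd : 0 < d) :
    ∫ t in Set.Ioi (0 : ℝ), binomialTail N k (min 1 (c * t ^ d)) =
      c ^ (-(1 / d)) * (Real.Gamma (k + 1 / d) / Real.Gamma k) *
        (Real.Gamma (N + 1) / Real.Gamma (N + 1 + 1 / d)) := by
  rw [← integral_binomialTail_comp_mul_rpow hk hkN hc hd,
    intervalIntegral.integral_of_le (Real.rpow_nonneg hc.le _),
    setIntegral_eq_of_subset_of_forall_sdiff_eq_zero measurableSet_Ioi Set.Ioc_subset_Ioi_self]
  · refine setIntegral_congr_fun measurableSet_Ioc fun t ht => ?_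
    have hle : c * t ^ d ≤ 1 := by
      rw [← mul_rpow_neg_one_div_rpow hc hd.ne']
      gcongr
      exacts [ht.1.le, ht.2]
    simp only [min_eq_right hle]
  · intro t ht
    rw [Set.Ioi_sdiff_Ioc, Set.mem_Ioi, max_lt_iff] at ht
    rw [min_one_mul_rpow_eq_one hc hd ht.2.le, binomialTail_one hkN]

end FlatIntegral

section OrderStatistic

theorem lt_getElem_iff_countP_le {α : Type*} [LinearOrder α] (l : α) {L : List α}
    (hL : L.Pairwise (· ≤ ·)) {i : ℕ} (hi : i < L.length) :
    l < L[i] ↔ L.countP (· ≤ l) ≤ i := by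
  induction L generalizing i with
  | nil => simp at hi
  | cons a L ih =>
    rw [List.pairwise_cons] at hL
    by_cases ha : a ≤ l
    · cases i with
      | zero => simp [ha]
      | succ i => simpa [ha] using ih hL.2 (by simpa using hi)
    · have hmin : ∀ b ∈ a :: L, l < b := by
        rintro b (_ | ⟨_, hb⟩)
        exacts [not_le.1 ha, (not_le.1 ha).trans_le (hL.1 b hb)]
      have hcount : (a :: L).countP (· ≤ l) = 0 :=
        List.countP_eq_zero.2 fun b hb => by simpa using hmin b hb
      simpa [hcount] using hmin _ (List.getElem_mem hi)

variable {N k : ℕ}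

theorem kthVal_mem_range (hk : 1 ≤ k) (hkN : k ≤ N) (v : Fin N → ℝ) :
    kthVal k v ∈ Set.range v := by
  have hlen : k - 1 < ((Finset.univ.val.map v).sort (· ≤ ·)).length := by simp; omega
  have hmem := List.getElem_mem hlen
  rw [Multiset.mem_sort, Multiset.mem_map] at hmem
  obtain ⟨i, -, hi⟩ := hmem
  exact ⟨i, by rw [hi, kthVal, List.getD_eq_getElem _ _ hlen]⟩

theorem lt_kthVal_iff (hk : 1 ≤ k) (hkN : k ≤ N) (v : Fin N → ℝ) (l : ℝ) :
    l < kthVal k v ↔ {i | v i ≤ l}.ncard < k := by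
  have hlen : k - 1 < ((Finset.univ.val.map v).sort (· ≤ ·)).length := by simp; omega
  have hcount : ((Finset.univ.val.map v).sort (· ≤ ·)).countP (· ≤ l) = {i | v i ≤ l}.ncard := by
    rw [← Multiset.coe_countP, Multiset.sort_eq, Multiset.countP_map, Set.ncard_eq_toFinset_card',
      Set.toFinset_ofPred]
    rfl
  rw [kthVal, List.getD_eq_getElem _ _ hlen,
    lt_getElem_iff_countP_le l (Multiset.pairwise_sort _ _) hlen, hcount]
  omega

theorem measurable_kthVal (hk : 1 ≤ k) (hkN : k ≤ N) :
    Measurable (kthVal k : (Fin N → ℝ) → ℝ) := by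
  refine measurable_of_Ioi fun t => ?_
  have hset : Measurable fun v : Fin N → ℝ => {i | v i ≤ t} :=
    measurable_set_iff.2 fun i => by
      simpa using (measurableSet_Iic.preimage (measurable_pi_apply i)).mem
  have hncard : Measurable fun v : Fin N → ℝ => {i | v i ≤ t}.ncard :=
    (Measurable.of_discrete (f := Set.ncard)).comp hset
  simpa only [Set.preimage, Set.mem_Ioi, lt_kthVal_iff hk hkN] using
    measurableSet_lt hncard measurable_const

end OrderStatistic

section Sample

open ProbabilityTheory
open scoped unitInterval

theorem integrable_dist_of_isBounded {M : Type*} [PseudoMetricSpace M] [MeasurableSpace M]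
    [OpensMeasurableSpace M] {μ : Measure M} [IsFiniteMeasure μ]
    (hM : Bornology.IsBounded (Set.univ : Set M)) (x : M) : Integrable (dist x) μ :=
  .of_bound (continuous_const.dist continuous_id).measurable.aestronglyMeasurable
    (diam (Set.univ : Set M)) <| .of_forall fun y => by
      simpa using dist_le_diam_of_mem hM (Set.mem_univ x) (Set.mem_univ y)

variable {Ω : Type*} [MeasurableSpace Ω] {μ : Measure Ω}

theorem ae_nonneg_of_measureReal_le_zero [IsFiniteMeasure μ] {f : Ω → ℝ}
    (hf : μ.real {y | f y ≤ 0} = 0) : 0 ≤ᵐ[μ] f :=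
  measure_mono_null (fun y (hy : ¬0 ≤ f y) => (not_le.1 hy).le) ((measureReal_eq_zero_iff).1 hf)

theorem ae_nonneg_kthVal_comp [SigmaFinite μ] {f : Ω → ℝ} (hf : 0 ≤ᵐ[μ] f) {N k : ℕ}
    (hk : 1 ≤ k) (hkN : k ≤ N) :
    0 ≤ᵐ[Measure.pi fun _ => μ] fun ω : Fin N → Ω => kthVal k fun i => f (ω i) := by
  have hall : ∀ᵐ ω ∂(Measure.pi fun _ : Fin N => μ), ∀ i, 0 ≤ f (ω i) :=
    eventually_all.2 fun i => Measure.tendsto_eval_ae_ae.eventually (p := (0 ≤ f ·)) hf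
  filter_upwards [hall] with ω hω
  obtain ⟨i, hi⟩ := kthVal_mem_range hk hkN fun i => f (ω i)
  exact (hω i).trans_eq hi

theorem integrable_kthVal_comp [IsFiniteMeasure μ] {f : Ω → ℝ} (hfm : Measurable f)
    (hf : Integrable f μ) {N k : ℕ} (hk : 1 ≤ k) (hkN : k ≤ N) :
    Integrable (fun ω : Fin N → Ω => kthVal k fun i => f (ω i)) (Measure.pi fun _ => μ) := by
  have hsum : Integrable (fun ω : Fin N → Ω => ∑ i, ‖f (ω i)‖) (Measure.pi fun _ => μ) :=
    integrable_finsetSum _ fun i _ => (integrable_comp_eval hf).norm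
  have hmeas : Measurable fun ω : Fin N → Ω => kthVal k fun i => f (ω i) :=
    (measurable_kthVal hk hkN).comp (by fun_prop)
  refine hsum.mono' hmeas.aestronglyMeasurable (.of_forall fun ω => ?_)
  obtain ⟨i, hi⟩ := kthVal_mem_range hk hkN fun i => f (ω i)
  rw [← hi]
  exact Finset.single_le_sum (f := fun i => ‖f (ω i)‖) (fun j _ => norm_nonneg _)
    (Finset.mem_univ i)

variable [IsProbabilityMeasure μ]

theorem map_mem_eq_bernoulliMeasure {B : Set Ω} (hB : MeasurableSet B) {p : I}
    (hp : μ.real B = p) : μ.map (· ∈ B) = bernoulliMeasure True False p := by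
  have hcompl : μ.real Bᶜ = 1 - p := by rw [probReal_compl_eq_one_sub hB, hp]
  have : IsProbabilityMeasure (μ.map (· ∈ B)) :=
    Measure.isProbabilityMeasure_map hB.mem.aemeasurable
  refine Measure.ext_of_measureReal_singleton fun q => ?_
  rw [map_measureReal_apply hB.mem (measurableSet_singleton q)]
  by_cases hq : q
  · have hpre : (· ∈ B) ⁻¹' {q} = B := by ext; simp [hq]
    rw [hpre, hp, bernoulliMeasure_real_apply_of_mem_of_notMem _ (measurableSet_singleton q)]
      <;> simp [hq]
  · have hpre : (· ∈ B) ⁻¹' {q} = Bᶜ := by ext; simp [hq]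
    rw [hpre, hcompl, bernoulliMeasure_real_apply_of_notMem_of_mem _ (measurableSet_singleton q)]
      <;> simp [hq]

theorem isSetBernoulli_pi {ι : Type*} [Fintype ι] {B : Set Ω} (hB : MeasurableSet B) {p : I}
    (hp : μ.real B = p) :
    IsSetBernoulli (fun ω : ι → Ω => {i | ω i ∈ B}) Set.univ p (Measure.pi fun _ => μ) where
  aemeasurable := Measurable.aemeasurable <|
    measurable_set_iff.2 fun i => hB.mem.comp (measurable_pi_apply i)
  map_eq := by
    have hind : Measurable fun (ω : ι → Ω) i => ω i ∈ B :=
      measurable_pi_lambda _ fun i => hB.mem.comp (measurable_pi_apply i)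
    have hset : Measurable fun q : ι → Prop => {i | q i} := by fun_prop
    have : IsProbabilityMeasure (μ.map (· ∈ B)) :=
      Measure.isProbabilityMeasure_map hB.mem.aemeasurable
    rw [setBernoulli_eq_map]
    simp only [Set.mem_univ, ← bernoulliMeasure_def, ← map_mem_eq_bernoulliMeasure hB hp]
    rw [Measure.infinitePi_eq_pi, ← Measure.pi_map_pi fun _ => hB.mem.aemeasurable,
      Measure.map_map hset hind]
    rfl

theorem measureReal_ncard_lt {ι : Type*} [Fintype ι] {B : Set Ω} (hB : MeasurableSet B) (k : ℕ) :
    (Measure.pi fun _ : ι => μ).real {ω | {i | ω i ∈ B}.ncard < k} =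
      binomialTail (Fintype.card ι) k (μ.real B) := by
  obtain ⟨p, hp⟩ : ∃ p : I, μ.real B = p :=
    ⟨⟨μ.real B, measureReal_nonneg, measureReal_le_one⟩, rfl⟩
  have hncard : HasLaw Set.ncard ((setBernoulli (Set.univ : Set ι) p).map Set.ncard)
      (setBernoulli (Set.univ : Set ι) p) := ⟨by fun_prop, rfl⟩
  have hlaw := hncard.fun_comp (isSetBernoulli_pi (ι := ι) hB hp)
  have hrange : {n : ℕ | n < k} = Finset.range k := by ext; simp
  rw [hp, hlaw.measureReal_eq (p := (· < k)) .of_discrete, hrange, ← sum_measureReal_singleton,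
    binomialTail]
  refine Finset.sum_congr rfl fun j _ => ?_
  rw [map_ncard_setBernoulli_real_singleton Set.finite_univ, Set.ncard_univ,
    Nat.card_eq_fintype_card]

theorem measureReal_lt_kthVal {f : Ω → ℝ} (hf : Measurable f) {N k : ℕ} (hk : 1 ≤ k)
    (hkN : k ≤ N) (t : ℝ) :
    (Measure.pi fun _ : Fin N => μ).real {ω | t < kthVal k fun i => f (ω i)} =
      binomialTail N k (μ.real {y | f y ≤ t}) := by
  simp only [lt_kthVal_iff hk hkN]
  simpa using measureReal_ncard_lt (ι := Fin N) (measurableSet_le hf measurable_const) k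

theorem integral_kthVal_comp {f : Ω → ℝ} (hfm : Measurable f) (hf : Integrable f μ)
    (hf0 : 0 ≤ᵐ[μ] f) {N k : ℕ} (hk : 1 ≤ k) (hkN : k ≤ N) :
    ∫ ω : Fin N → Ω, kthVal k (fun i => f (ω i)) ∂(Measure.pi fun _ => μ) =
      ∫ t in Set.Ioi 0, binomialTail N k (μ.real {y | f y ≤ t}) := by
  rw [(integrable_kthVal_comp hfm hf hk hkN).integral_eq_integral_meas_lt
    (ae_nonneg_kthVal_comp hf0 hk hkN)]
  simp only [measureReal_lt_kthVal hfm hk hkN]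

theorem integrableOn_one_sub_measureReal_le {f : Ω → ℝ} (hfm : Measurable f)
    (hf : Integrable f μ) (hf0 : 0 ≤ᵐ[μ] f) :
    IntegrableOn (fun t => 1 - μ.real {y | f y ≤ t}) (Set.Ioi 0) := by
  have hcompl : ∀ t, 1 - μ.real {y | f y ≤ t} = μ.real {y | t < f y} := fun t => by
    rw [← probReal_compl_eq_one_sub (measurableSet_le hfm measurable_const)]
    simp only [Set.compl_ofPred, not_le]
  have hanti : Antitone fun t => μ.real {y | t < f y} := fun s t hst =>
    measureReal_mono fun y (hy : t < f y) => hst.trans_lt hy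
  simp only [hcompl]
  refine ⟨hanti.measurable.aestronglyMeasurable, ?_⟩
  rw [hasFiniteIntegral_iff_ofReal (.of_forall fun _ => measureReal_nonneg)]
  simp only [ofReal_measureReal (measure_ne_top _ _)]
  rw [← lintegral_eq_lintegral_meas_lt μ hf0 hf.aemeasurable]
  exact hf.lintegral_lt_top

theorem measureReal_le_eq_min_or_le {f : Ω → ℝ} {c d l₀ : ℝ} (hc : 0 ≤ c) (hd : 0 ≤ d)
    (hl₀ : 0 ≤ l₀) (hA : ∀ l, 0 ≤ l → l ≤ l₀ → μ.real {y | f y ≤ l} = c * l ^ d) {t : ℝ}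
    (ht : 0 ≤ t) :
    μ.real {y | f y ≤ t} = min 1 (c * t ^ d) ∨
      c * l₀ ^ d ≤ μ.real {y | f y ≤ t} ∧ c * l₀ ^ d ≤ min 1 (c * t ^ d) := by
  rcases le_total t l₀ with htl | hlt
  · left
    rw [← hA t ht htl, min_eq_right measureReal_le_one]
  · right
    rw [le_min_iff, ← hA l₀ hl₀ le_rfl]
    refine ⟨measureReal_mono fun y (hy : f y ≤ l₀) => hy.trans hlt, measureReal_le_one, ?_⟩
    rw [hA l₀ hl₀ le_rfl]
    gcongr

theorem kth_nearest_distance_flat_2d_general {f : Ω → ℝ} (hfm : Measurable f)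
    (hf : Integrable f μ) {c d l₀ ρ : ℝ} (hc : 0 < c) (hd : 0 < d) (hl₀ : 0 ≤ l₀)
    (hA : ∀ l, 0 ≤ l → l ≤ l₀ → μ.real {y | f y ≤ l} = c * l ^ d) (hρ : 1 - c * l₀ ^ d < ρ)
    {k : ℕ} (hk : 1 ≤ k) :
    ∃ C > 0, ∀ N : ℕ, k ≤ N →
      |∫ ω : Fin N → Ω, kthVal k (fun i => f (ω i)) ∂(Measure.pi fun _ => μ) -
          c ^ (-(1 / d)) * (Real.Gamma (k + 1 / d) / Real.Gamma k) *
            (Real.Gamma (N + 1) / Real.Gamma (N + 1 + 1 / d))| ≤ C * ρ ^ N := by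
  have hp₀ : 0 ≤ c * l₀ ^ d := by positivity
  have hρ0 : 0 < ρ :=
    (sub_nonneg.2 (hA l₀ hl₀ le_rfl ▸ measureReal_le_one)).trans_lt hρ
  have hf0 : 0 ≤ᵐ[μ] f := ae_nonneg_of_measureReal_le_zero <| by
    rw [hA 0 le_rfl hl₀, Real.zero_rpow hd.ne', mul_zero]
  refine ⟨k / (ρ - (1 - c * l₀ ^ d)) ^ k *
    (∫ t in Set.Ioi 0, |μ.real {y | f y ≤ t} - min 1 (c * t ^ d)|) + 1,
    by have := sub_pos.2 hρ; positivity, fun N hkN => ?_⟩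
  rw [integral_kthVal_comp hfm hf hf0 hk hkN,
    ← integral_binomialTail_comp_min_one_mul_rpow hk hkN hc hd]
  have hbound := abs_integral_binomialTail_sub_le hkN hp₀ hρ
    (.of_forall fun _ => ⟨measureReal_nonneg, measureReal_le_one⟩)
    (ae_restrict_of_forall_mem measurableSet_Ioi fun t (ht : 0 < t) =>
      ⟨le_min zero_le_one (by positivity), min_le_left _ _⟩)
    (integrableOn_one_sub_measureReal_le hfm hf hf0)
    (integrableOn_one_sub_min_one_mul_rpow hc hd)
    (ae_restrict_of_forall_mem measurableSet_Ioi fun t ht =>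
      measureReal_le_eq_min_or_le hc.le hd.le hl₀ hA (Set.mem_Ioi.1 ht).le)
  refine hbound.trans ?_
  rw [mul_right_comm]
  gcongr
  exact (lt_add_one _).le

end Sample

/-- Let `M` be a separable metric space of finite diameter carrying a Borel
probability measure `μ`, and fix `x ∈ M` and `k ≥ 1`.  Suppose there is `l₀ > 0` with
`π l₀² ≤ 1` such that `A(l) = μ(closedBall x l) = π l²` for all `0 ≤ l ≤ l₀` (the space is
locally flat and two-dimensional around `x` out to radius `l₀`).  Then for every
`ρ ∈ (1 − π l₀², 1)` there is `C > 0` such that for all `N ≥ k`, the expected `k`-th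
nearest-neighbor distance (for `N` i.i.d. sites, product measure on `Fin N → M`) satisfies
`|E[D_k(N)] − (1/√π) (Γ(k+1/2)/Γ(k)) (Γ(N+1)/Γ(N+3/2))| ≤ C ρ^N`. -/
theorem kth_nearest_distance_flat_2d
    {M : Type*} [MetricSpace M] [TopologicalSpace.SeparableSpace M]
    [MeasurableSpace M] [BorelSpace M]
    (μ : Measure M) [IsProbabilityMeasure μ]
    (hdiam : EMetric.diam (Set.univ : Set M) < ⊤)
    (x : M) (k : ℕ) (hk : 1 ≤ k)
    (l₀ : ℝ) (hl₀ : 0 < l₀) (hl₀1 : Real.pi * l₀ ^ 2 ≤ 1)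
    (hA : ∀ l : ℝ, 0 ≤ l → l ≤ l₀ →
      (μ (closedBall x l)).toReal = Real.pi * l ^ 2)
    (ρ : ℝ) (hρ₁ : 1 - Real.pi * l₀ ^ 2 < ρ) (hρ₂ : ρ < 1) :
    ∃ C > 0, ∀ N : ℕ, k ≤ N →
      |(∫ ω : Fin N → M, kthVal k (fun i => dist x (ω i))
            ∂(Measure.pi fun _ : Fin N => μ)) -
          (Real.sqrt Real.pi)⁻¹ * (Real.Gamma (k + 1/2) / Real.Gamma k) *
            (Real.Gamma (N + 1) / Real.Gamma (N + 3/2))| ≤ C * ρ ^ N := by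
  have hmeas : Measurable (dist x) := (continuous_const.dist continuous_id).measurable
  have hint : Integrable (dist x) μ :=
    integrable_dist_of_isBounded (isBounded_iff_ediam_ne_top.2 hdiam.ne) x
  have hball : ∀ l, closedBall x l = {y | dist x y ≤ l} := fun l =>
    Set.ext fun y => by rw [mem_closedBall', Set.mem_ofPred_eq]
  have hsqrt : (Real.sqrt Real.pi)⁻¹ = Real.pi ^ (-(1 / 2) : ℝ) := by
    rw [Real.rpow_neg Real.pi_pos.le, Real.sqrt_eq_rpow]
  have hN : ∀ N : ℝ, N + 1 + 1 / 2 = N + 3 / 2 := fun N => by ring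
  simpa only [hsqrt, hN] using kth_nearest_distance_flat_2d_general hmeas hint Real.pi_pos two_pos
    hl₀.le (fun l h0 hl => by rw [Real.rpow_two, ← hA l h0 hl, hball, measureReal_def])
    (by rwa [Real.rpow_two]) hk
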